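/- For every z ∈ ℝ, lim_{X→∞} #{D fundamental discriminant : 1 < |D| ≤ X and ω(D) − log log X ≤ z·√(log log X)} / #{D fundamental discriminant : 1 < |D| ≤ X} = (1/√(2π)) ∫_{−∞}^{z} e^{−t²/2} dt. That is, the number of distinct prime divisors of fundamental discriminants D with |D| ≤ X (equivalently, the number of ramified primes in quadratic fields of absolute discriminant at most X) is normally distributed with mean and variance log log X. -/

import Mathlib

/-!
By Lévy's continuity theorem it suffices to study the mean over `n ≤ X` of
`exp (i θ (ω(n) - L))`, where `L = log log X` and `θ = t / √L`. First let `n` run over all positive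
integers, and keep only the primes up to `Y = X ^ (1 / L)`. Expanding `z ^ ω_Y(n)`, `z = exp (i θ)`,
over sets of primes gives the Euler product `∏ (1 + (z - 1) / p)`. Rankin's trick with exponent
`1 / log Y` bounds the rounding errors by `exp (-L + 3 |θ| ∑ 1 / p)`; this is `o(1)` because
`θ → 0`, so no sieve is needed. The primes in `(Y, X]` contribute at most `|θ| ∑_{Y < p ≤ X} 1 / p`.
The form `∑_{p ≤ x} 1 / p = log log x + o(√(log log x))` of Mertens' theorem suffices for both; it
follows from the growth of the harmonic sum and of `ζ(s)` as `s → 1`.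

The limit law does not change under `n ↦ d n`, so it holds for the multiples of `d`, with mean
`1 / d`, and by dominated convergence for weights `∑_{d ∣ n} w(d)` with `∑ |w(d)| / d < ∞`. Möbius
inversion puts the indicator function of the squarefree numbers into this form. For `n > 1` there
are `μ²(n) - μ²(n / 2) + 2 μ²(n / 4)` fundamental discriminants of absolute value `n`, and this
weight has mean `(1 - 1 / 2 + 2 / 4) / ζ(2) ≠ 0`. Dividing by the case `t = 0` gives
the convergence of the characteristic functions.
-/

open MeasureTheory Filter

noncomputable section

/-- `D` is a fundamental discriminant: `D ≠ 1` and either `D ≡ 1 (mod 4)` and `D` is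
squarefree, or `D = 4m` with `m ≡ 2` or `3 (mod 4)` and `m` squarefree. -/
def IsFundamentalDiscriminant (D : ℤ) : Prop :=
  D ≠ 1 ∧ ((D % 4 = 1 ∧ Squarefree D) ∨
    (∃ m : ℤ, D = 4 * m ∧ (m % 4 = 2 ∨ m % 4 = 3) ∧ Squarefree m))

/-- The number of distinct primes dividing a nonzero integer. -/
def omegaZ (n : ℤ) : ℕ := n.natAbs.primeFactors.card

/-- The cumulative distribution function of the standard Gaussian. -/
def gaussCDF (z : ℝ) : ℝ :=
  (Real.sqrt (2 * Real.pi))⁻¹ * ∫ t in Set.Iic z, Real.exp (-t ^ 2 / 2)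

open scoped Topology

/-! ### A weak form of Mertens' second theorem -/

/-- The iterated logarithm `log log x`, mean and variance in the Erdős–Kac theorem. -/
def loglog (x : ℝ) : ℝ := Real.log (Real.log x)

/-- The sum of `1 / p` over the primes `p ≤ x`. -/
def primeRecipSum (x : ℝ) : ℝ := ∑ p ∈ Nat.primesLE ⌊x⌋₊, (p : ℝ)⁻¹

lemma tendsto_loglog_atTop : Tendsto loglog atTop atTop :=
  Real.tendsto_log_atTop.comp Real.tendsto_log_atTop

lemma sum_inv_sq_le_two (P : Finset ℕ) : ∑ n ∈ P, ((n : ℝ) ^ 2)⁻¹ ≤ 2 := by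
  have hsum : HasSum (fun n : ℕ => ((n : ℝ) ^ 2)⁻¹) (Real.pi ^ 2 / 6) := by
    simpa only [one_div] using hasSum_zeta_two
  have hle := sum_le_hasSum P (fun n _ => by positivity) hsum
  nlinarith [Real.pi_lt_d2, Real.pi_pos]

section EulerProduct

variable {f : ℕ →* ℝ}

lemma sum_Icc_le_prod_primesLE (hf : ∀ n, 0 ≤ f n) (hf1 : ∀ {p : ℕ}, p.Prime → f p < 1) (N : ℕ) :
    ∑ n ∈ Finset.Icc 1 N, f n ≤ ∏ p ∈ Nat.primesLE N, (1 - f p)⁻¹ := by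
  obtain ⟨-, hprod⟩ := EulerProduct.summable_and_hasSum_smoothNumbers_prod_primesBelow_geometric
    (f := f) (fun {p} hp => by simpa [abs_of_nonneg (hf p)] using hf1 hp) (N + 1)
  have hsmooth : ∀ n ∈ Finset.Icc 1 N, n ∈ Nat.smoothNumbers (N + 1) := fun n hn =>
    Nat.mem_smoothNumbers_of_lt (Finset.mem_Icc.1 hn).1
      (Nat.lt_succ_of_le (Finset.mem_Icc.1 hn).2)
  rw [← Finset.sum_subtype_of_mem f hsmooth]
  exact sum_le_hasSum _ (fun n _ => hf n) hprod

lemma prod_primesLE_le_tsum (hf : ∀ n, 0 ≤ f n) (hs : Summable f) (N : ℕ) :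
    ∏ p ∈ Nat.primesLE N, (1 - f p)⁻¹ ≤ ∑' n, f n :=
  (EulerProduct.prod_primesBelow_geometric_eq_tsum_smoothNumbers hs (N + 1)).trans_le
    (hs.tsum_subtype_le (f := f) _ hf)

end EulerProduct

/-- The completely multiplicative function `n ↦ n ^ (-σ)`, to which Euler products apply. -/
def invRpowHom (σ : ℝ) : ℕ →* ℝ where
  toFun n := ((n : ℝ) ^ σ)⁻¹
  map_one' := by simp
  map_mul' m n := by
    push_cast
    rw [Real.mul_rpow (by positivity) (by positivity), mul_inv]

lemma invRpowHom_apply (σ : ℝ) (n : ℕ) : invRpowHom σ n = ((n : ℝ) ^ σ)⁻¹ := rfl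

lemma invRpowHom_nonneg (σ : ℝ) (n : ℕ) : 0 ≤ invRpowHom σ n := by
  rw [invRpowHom_apply]; positivity

lemma invRpowHom_lt_one {σ : ℝ} (hσ : 0 < σ) {p : ℕ} (hp : p.Prime) : invRpowHom σ p < 1 :=
  inv_lt_one_of_one_lt₀ (Real.one_lt_rpow (by exact_mod_cast hp.one_lt) hσ)

lemma log_inv_one_sub_le {x : ℝ} (hx0 : 0 ≤ x) (hx : x ≤ 1 / 2) :
    Real.log (1 - x)⁻¹ ≤ x + 2 * x ^ 2 := by
  have hpos : 0 < 1 - x := by linarith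
  calc Real.log (1 - x)⁻¹ ≤ (1 - x)⁻¹ - 1 := Real.log_le_sub_one_of_pos (inv_pos.2 hpos)
    _ = x / (1 - x) := by field_simp; ring
    _ ≤ x + 2 * x ^ 2 := by rw [div_le_iff₀ hpos]; nlinarith [mul_nonneg hx0 hx0]

lemma log_le_prod_primesLE {x : ℝ} (hx : 0 ≤ x) :
    Real.log x ≤ ∏ p ∈ Nat.primesLE ⌊x⌋₊, (1 - (p : ℝ)⁻¹)⁻¹ := by
  refine (log_le_harmonic_floor x hx).trans ?_
  rw [harmonic_eq_sum_Icc]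
  simpa [invRpowHom_apply] using
    sum_Icc_le_prod_primesLE (invRpowHom_nonneg 1) (invRpowHom_lt_one one_pos) ⌊x⌋₊

lemma loglog_le_primeRecipSum_add {x : ℝ} (hx : 1 < x) : loglog x ≤ primeRecipSum x + 4 := by
  have hp2 : ∀ p ∈ Nat.primesLE ⌊x⌋₊, (p : ℝ)⁻¹ ≤ 1 / 2 := fun p hp => by
    rw [one_div]
    exact inv_anti₀ two_pos (by exact_mod_cast (Nat.two_le_of_mem_primesLE hp))
  calc loglog x ≤ Real.log (∏ p ∈ Nat.primesLE ⌊x⌋₊, (1 - (p : ℝ)⁻¹)⁻¹) :=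
        Real.log_le_log (Real.log_pos hx) (log_le_prod_primesLE (by linarith))
    _ = ∑ p ∈ Nat.primesLE ⌊x⌋₊, Real.log (1 - (p : ℝ)⁻¹)⁻¹ :=
        Real.log_prod fun p hp => inv_ne_zero (by linarith [hp2 p hp])
    _ ≤ ∑ p ∈ Nat.primesLE ⌊x⌋₊, ((p : ℝ)⁻¹ + 2 * ((p : ℝ)⁻¹) ^ 2) :=
        Finset.sum_le_sum fun p hp => log_inv_one_sub_le (by positivity) (hp2 p hp)
    _ ≤ primeRecipSum x + 4 := by
        rw [Finset.sum_add_distrib, ← Finset.mul_sum, primeRecipSum]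
        simp only [inv_pow]
        linarith [sum_inv_sq_le_two (Nat.primesLE ⌊x⌋₊)]

lemma sum_primesLE_inv_rpow_le_log {σ : ℝ} (hσ : 1 < σ) (N : ℕ) :
    ∑ p ∈ Nat.primesLE N, ((p : ℝ) ^ σ)⁻¹ ≤ Real.log (∑' n : ℕ, ((n : ℝ) ^ σ)⁻¹) := by
  have hlt : ∀ p ∈ Nat.primesLE N, 0 < 1 - invRpowHom σ p := fun p hp =>
    sub_pos.2 (invRpowHom_lt_one (by linarith) (Nat.prime_of_mem_primesLE hp))
  calc ∑ p ∈ Nat.primesLE N, ((p : ℝ) ^ σ)⁻¹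
      ≤ ∑ p ∈ Nat.primesLE N, Real.log (1 - invRpowHom σ p)⁻¹ :=
        Finset.sum_le_sum fun p hp => by
          rw [Real.log_inv, ← invRpowHom_apply]
          linarith [Real.log_le_sub_one_of_pos (hlt p hp)]
    _ = Real.log (∏ p ∈ Nat.primesLE N, (1 - invRpowHom σ p)⁻¹) :=
        (Real.log_prod fun p hp => inv_ne_zero (hlt p hp).ne').symm
    _ ≤ _ := Real.log_le_log (Finset.prod_pos fun p hp => inv_pos.2 (hlt p hp))
        (prod_primesLE_le_tsum (invRpowHom_nonneg σ) (Real.summable_nat_rpow_inv.2 hσ) N)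

lemma primeRecipSum_le_rpow_mul {x δ : ℝ} (hx : 0 ≤ x) (hδ : 0 ≤ δ) :
    primeRecipSum x ≤ x ^ δ * ∑ p ∈ Nat.primesLE ⌊x⌋₊, ((p : ℝ) ^ (1 + δ))⁻¹ := by
  rw [primeRecipSum, Finset.mul_sum]
  refine Finset.sum_le_sum fun p hp => ?_
  have hp0 : (0 : ℝ) < p := by exact_mod_cast (Nat.prime_of_mem_primesLE hp).pos
  have hpx : (p : ℝ) ≤ x := (Nat.le_floor_iff hx).1 (Nat.le_of_mem_primesLE hp)
  rw [Real.rpow_add hp0, Real.rpow_one, mul_inv, mul_left_comm]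
  refine le_mul_of_one_le_right (by positivity) ?_
  rw [← div_eq_mul_inv, one_le_div (by positivity)]
  exact Real.rpow_le_rpow hp0.le hpx hδ

lemma eventually_tsum_inv_rpow_le :
    ∀ᶠ δ in 𝓝[>] (0 : ℝ), ∑' n : ℕ, ((n : ℝ) ^ (1 + δ))⁻¹ ≤ 2 / δ := by
  have hshift : Tendsto (fun δ : ℝ => 1 + δ) (𝓝[>] 0) (𝓝[>] 1) := by
    refine tendsto_nhdsWithin_iff.2 ⟨?_, ?_⟩
    · exact ((continuous_const_add (1 : ℝ)).tendsto' 0 1 (add_zero 1)).mono_left nhdsWithin_le_nhds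
    · filter_upwards [self_mem_nhdsWithin] with δ (hδ : 0 < δ) using lt_add_of_pos_right 1 hδ
  filter_upwards [hshift.eventually
    (tendsto_sub_mul_tsum_nat_rpow.eventually (gt_mem_nhds one_lt_two)),
    self_mem_nhdsWithin] with δ hlt (hδ : 0 < δ)
  rw [le_div_iff₀ hδ, mul_comm]
  simpa only [add_sub_cancel_left, one_div] using hlt.le

-- The choice `δ = 1 / (log x * loglog x)` makes `x ^ δ` tend to `1`.
lemma eventually_primeRecipSum_le : ∀ᶠ x in atTop, primeRecipSum x ≤
    Real.exp (1 / loglog x) * (Real.log 2 + loglog x + Real.log (loglog x)) := by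
  have hδ : Tendsto (fun x : ℝ => (Real.log x * loglog x)⁻¹) atTop (𝓝[>] 0) :=
    tendsto_inv_atTop_nhdsGT_zero.comp
      (Real.tendsto_log_atTop.atTop_mul_atTop₀ tendsto_loglog_atTop)
  filter_upwards [hδ.eventually eventually_tsum_inv_rpow_le,
    Real.tendsto_log_atTop.eventually_gt_atTop 0,
    tendsto_loglog_atTop.eventually_gt_atTop 0, eventually_gt_atTop 0] with x hzeta hlog hL hx
  have hδpos : 0 < (Real.log x * loglog x)⁻¹ := by positivity
  have hxδ : x ^ (Real.log x * loglog x)⁻¹ = Real.exp (1 / loglog x) := by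
    rw [Real.rpow_def_of_pos hx]
    congr 1; field_simp
  have hzeta_pos : 0 < ∑' n : ℕ, ((n : ℝ) ^ (1 + (Real.log x * loglog x)⁻¹))⁻¹ :=
    (Real.summable_nat_rpow_inv.2 (by linarith)).tsum_pos (fun n => by positivity) 1 (by simp)
  refine (primeRecipSum_le_rpow_mul hx.le hδpos.le).trans ?_
  rw [hxδ]
  gcongr
  calc ∑ p ∈ Nat.primesLE ⌊x⌋₊, ((p : ℝ) ^ (1 + (Real.log x * loglog x)⁻¹))⁻¹
      ≤ Real.log (∑' n : ℕ, ((n : ℝ) ^ (1 + (Real.log x * loglog x)⁻¹))⁻¹) :=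
        sum_primesLE_inv_rpow_le_log (by linarith) _
    _ ≤ Real.log (2 / (Real.log x * loglog x)⁻¹) := Real.log_le_log hzeta_pos hzeta
    _ = Real.log 2 + loglog x + Real.log (loglog x) := by
        rw [div_inv_eq_mul, Real.log_mul (by norm_num) (by positivity),
          Real.log_mul hlog.ne' hL.ne', ← loglog, add_assoc]

lemma exp_one_div_mul_sub_le {L : ℝ} (hL : 1 ≤ L) :
    Real.exp (1 / L) * (Real.log 2 + L + Real.log L) - L ≤ 5 + 3 * Real.log L := by
  have hinv : 1 / L ≤ 1 := by rwa [div_le_one (by linarith)]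
  have hexp : Real.exp (1 / L) - 1 ≤ 2 * (1 / L) := by
    have habs : |1 / L| = 1 / L := abs_of_pos (by positivity)
    exact (le_abs_self _).trans
      ((Real.abs_exp_sub_one_le (habs.trans_le hinv)).trans_eq (by rw [habs]))
  have hmain : L * (Real.exp (1 / L) - 1) ≤ 2 := by
    calc L * (Real.exp (1 / L) - 1) ≤ L * (2 * (1 / L)) := by gcongr
      _ = 2 := by field_simp
  have hrest : Real.exp (1 / L) * (Real.log 2 + Real.log L) ≤ 3 * (1 + Real.log L) := by
    have hlogL := Real.log_nonneg hL
    gcongr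
    · linarith
    · linarith [Real.log_two_lt_d9]
  linarith

lemma tendsto_primeRecipSum_sub_loglog :
    Tendsto (fun x => (primeRecipSum x - loglog x) / √(loglog x)) atTop (𝓝 0) := by
  have hinvsqrt : Tendsto (fun L : ℝ => (√L)⁻¹) atTop (𝓝 0) :=
    Real.tendsto_sqrt_atTop.inv_tendsto_atTop
  have hlogsqrt : Tendsto (fun L : ℝ => Real.log L * (√L)⁻¹) atTop (𝓝 0) := by
    simpa [Real.sqrt_eq_rpow, div_eq_mul_inv] using
      (isLittleO_log_rpow_atTop (one_half_pos (α := ℝ))).tendsto_div_nhds_zero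
  have hlow : Tendsto (fun L : ℝ => -4 * (√L)⁻¹) atTop (𝓝 0) := by
    simpa using hinvsqrt.const_mul (-4)
  have hup : Tendsto (fun L : ℝ => (5 + 3 * Real.log L) * (√L)⁻¹) atTop (𝓝 0) := by
    simpa [add_mul, mul_assoc] using (hinvsqrt.const_mul 5).add (hlogsqrt.const_mul 3)
  simp only [div_eq_mul_inv]
  refine tendsto_of_tendsto_of_tendsto_of_le_of_le' (hlow.comp tendsto_loglog_atTop)
    (hup.comp tendsto_loglog_atTop) ?_ ?_
  · filter_upwards [eventually_gt_atTop 1] with x hx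
    have hle := loglog_le_primeRecipSum_add hx
    simp only [Function.comp]
    gcongr
    linarith
  · filter_upwards [eventually_primeRecipSum_le, tendsto_loglog_atTop.eventually_ge_atTop 1]
      with x hle hL
    have hbound := exp_one_div_mul_sub_le hL
    simp only [Function.comp]
    gcongr
    linarith

/-! ### Mean values of truncated powers -/

/-- The number of elements of `P` dividing `n`: for a set `P` of primes, a truncation of `ω`. -/
def omegaIn (P : Finset ℕ) (n : ℕ) : ℕ := (P.filter (· ∣ n)).card

lemma pow_omegaIn_eq_sum {R : Type*} [CommSemiring R] {P : Finset ℕ} (hP : ∀ p ∈ P, p.Prime)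
    (w : R) (n : ℕ) :
    (1 + w) ^ omegaIn P n = ∑ s ∈ P.powerset, if ∏ p ∈ s, p ∣ n then w ^ s.card else 0 := by
  have hpow : (P.filter (· ∣ n)).powerset = P.powerset.filter (∏ p ∈ ·, p ∣ n) := by
    ext s
    simp only [Finset.mem_powerset, Finset.mem_filter, Finset.subset_iff]
    refine ⟨fun h => ⟨fun p hp => (h hp).1, Finset.prod_primes_dvd n
      (fun p hp => (hP p (h hp).1).prime) fun p hp => (h hp).2⟩, fun ⟨hsub, hdvd⟩ p hp =>
      ⟨hsub hp, (Finset.dvd_prod_of_mem _ hp).trans hdvd⟩⟩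
  rw [omegaIn, ← Finset.prod_const, Finset.prod_one_add, hpow, Finset.sum_filter]
  simp only [Finset.prod_const]

lemma sum_pow_omegaIn {R : Type*} [CommSemiring R] {P : Finset ℕ} (hP : ∀ p ∈ P, p.Prime)
    (w : R) (N : ℕ) :
    ∑ n ∈ Finset.Ioc 0 N, (1 + w) ^ omegaIn P n =
      ∑ s ∈ P.powerset, w ^ s.card * ((N / ∏ p ∈ s, p : ℕ) : R) := by
  simp_rw [pow_omegaIn_eq_sum hP]
  rw [Finset.sum_comm]
  refine Finset.sum_congr rfl fun s _ => ?_
  rw [← Finset.sum_filter, Finset.sum_const, Nat.Ioc_filter_dvd_card_eq_div, nsmul_eq_mul, mul_comm]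

-- Rankin's trick: the error is at most `min (1 / X) (1 / d)`.
lemma abs_floor_div_sub_inv_le {X α : ℝ} (hX : 0 < X) (hα0 : 0 ≤ α) (hα1 : α ≤ 1) {d : ℕ}
    (hd : 0 < d) :
    |X⁻¹ * ((⌊X⌋₊ / d : ℕ) : ℝ) - (d : ℝ)⁻¹| ≤ X ^ (-α) * (d : ℝ) ^ (α - 1) := by
  have hd' : (0 : ℝ) < d := by exact_mod_cast hd
  have hsplit : ∀ {x : ℝ}, 0 < x → x⁻¹ = x ^ (-α) * x ^ (α - 1) := fun hx => by
    rw [← Real.rpow_add hx, ← Real.rpow_neg_one]; ring_nf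
  have hinv : (d : ℝ)⁻¹ = X⁻¹ * (X / d) := by field_simp
  have hfloor : X⁻¹ * (⌊X / d⌋₊ : ℝ) ≤ (d : ℝ)⁻¹ := by
    rw [hinv]; gcongr; exact Nat.floor_le (by positivity)
  rw [← Nat.floor_div_natCast, abs_sub_comm, abs_of_nonneg (by linarith)]
  rcases le_total (d : ℝ) X with hdX | hXd
  · calc (d : ℝ)⁻¹ - X⁻¹ * (⌊X / d⌋₊ : ℝ) ≤ X⁻¹ := by
          rw [hinv, ← mul_sub]
          exact mul_le_of_le_one_right (by positivity)
            (by linarith [Nat.lt_floor_add_one (X / d)])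
      _ = X ^ (-α) * X ^ (α - 1) := hsplit hX
      _ ≤ X ^ (-α) * (d : ℝ) ^ (α - 1) := by
          gcongr 1
          exact Real.rpow_le_rpow_of_nonpos hd' hdX (by linarith)
  · calc (d : ℝ)⁻¹ - X⁻¹ * (⌊X / d⌋₊ : ℝ) ≤ (d : ℝ)⁻¹ := sub_le_self _ (by positivity)
      _ = (d : ℝ) ^ (-α) * (d : ℝ) ^ (α - 1) := hsplit hd'
      _ ≤ X ^ (-α) * (d : ℝ) ^ (α - 1) := by
          gcongr 1
          exact Real.rpow_le_rpow_of_nonpos hX hXd (by linarith)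

lemma norm_mean_pow_omegaIn_sub_prod_le {X α : ℝ} (hX : 0 < X) (hα0 : 0 ≤ α) (hα1 : α ≤ 1)
    {P : Finset ℕ} (hP : ∀ p ∈ P, p.Prime) (w : ℂ) :
    ‖(X : ℂ)⁻¹ * ∑ n ∈ Finset.Ioc 0 ⌊X⌋₊, (1 + w) ^ omegaIn P n - ∏ p ∈ P, (1 + w * (p : ℂ)⁻¹)‖
      ≤ X ^ (-α) * ∏ p ∈ P, (1 + ‖w‖ * (p : ℝ) ^ (α - 1)) := by
  have hexpand : (X : ℂ)⁻¹ * ∑ n ∈ Finset.Ioc 0 ⌊X⌋₊, (1 + w) ^ omegaIn P n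
      - ∏ p ∈ P, (1 + w * (p : ℂ)⁻¹) = ∑ s ∈ P.powerset, w ^ s.card *
        ((X⁻¹ * ((⌊X⌋₊ / ∏ p ∈ s, p : ℕ) : ℝ) - ((∏ p ∈ s, p : ℕ) : ℝ)⁻¹ : ℝ) : ℂ) := by
    rw [sum_pow_omegaIn hP, Finset.prod_one_add, Finset.mul_sum, ← Finset.sum_sub_distrib]
    refine Finset.sum_congr rfl fun s _ => ?_
    rw [Finset.prod_mul_distrib, Finset.prod_const, Finset.prod_inv_distrib]
    push_cast
    ring
  rw [hexpand, Finset.prod_one_add, Finset.mul_sum]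
  refine norm_sum_le_of_le _ fun s hs => ?_
  rw [Finset.mem_powerset] at hs
  rw [norm_mul, norm_pow, Complex.norm_real, Real.norm_eq_abs, Finset.prod_mul_distrib,
    Finset.prod_const, mul_left_comm, Real.finsetProd_rpow _ _ (fun p _ => by positivity)]
  gcongr
  simpa only [Nat.cast_prod] using abs_floor_div_sub_inv_le hX hα0 hα1
    (Finset.prod_pos fun p hp => (hP p (hs hp)).pos)

-- Rankin's exponent is `1 / log Y`, so that `p ^ (1 / log Y) ≤ e` for `p ≤ Y`.
lemma norm_mean_pow_omegaIn_primesLE_sub_prod_le {X Y : ℝ} (hX : 0 < X) (hY : Real.exp 1 ≤ Y)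
    (w : ℂ) :
    ‖(X : ℂ)⁻¹ * ∑ n ∈ Finset.Ioc 0 ⌊X⌋₊, (1 + w) ^ omegaIn (Nat.primesLE ⌊Y⌋₊) n
        - ∏ p ∈ Nat.primesLE ⌊Y⌋₊, (1 + w * (p : ℂ)⁻¹)‖
      ≤ Real.exp (-(Real.log X / Real.log Y) + 3 * ‖w‖ * primeRecipSum Y) := by
  have hY0 : 0 < Y := (Real.exp_pos 1).trans_le hY
  have hlogY : 1 ≤ Real.log Y := (Real.le_log_iff_exp_le hY0).2 hY
  have hpow : ∀ p ∈ Nat.primesLE ⌊Y⌋₊, (p : ℝ) ^ ((Real.log Y)⁻¹ - 1) ≤ 3 * (p : ℝ)⁻¹ := by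
    intro p hp
    have hp0 : (0 : ℝ) < p := by exact_mod_cast (Nat.prime_of_mem_primesLE hp).pos
    rw [Real.rpow_sub_one hp0.ne', div_eq_mul_inv]
    gcongr
    calc (p : ℝ) ^ (Real.log Y)⁻¹ ≤ Y ^ (Real.log Y)⁻¹ := by
          gcongr
          exact (Nat.le_floor_iff hY0.le).1 (Nat.le_of_mem_primesLE hp)
      _ = Real.exp 1 := by rw [Real.rpow_def_of_pos hY0, mul_inv_cancel₀ (by linarith)]
      _ ≤ 3 := by linarith [Real.exp_one_lt_d9]
  calc _ ≤ X ^ (-(Real.log Y)⁻¹) *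
          ∏ p ∈ Nat.primesLE ⌊Y⌋₊, (1 + ‖w‖ * (p : ℝ) ^ ((Real.log Y)⁻¹ - 1)) :=
        norm_mean_pow_omegaIn_sub_prod_le hX (by positivity) (inv_le_one_of_one_le₀ hlogY)
          (fun _ => Nat.prime_of_mem_primesLE) w
    _ ≤ X ^ (-(Real.log Y)⁻¹) * ∏ p ∈ Nat.primesLE ⌊Y⌋₊, Real.exp (3 * ‖w‖ * (p : ℝ)⁻¹) := by
        gcongr with p hp
        have hmul := mul_le_mul_of_nonneg_left (hpow p hp) (norm_nonneg w)
        linarith [Real.add_one_le_exp (3 * ‖w‖ * (p : ℝ)⁻¹)]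
    _ = _ := by
        rw [← Real.exp_sum, ← Finset.mul_sum, Real.rpow_def_of_pos hX, ← Real.exp_add,
          primeRecipSum]
        ring_nf

lemma norm_prod_sub_prod_le {ι R : Type*} [NormedCommRing R] [NormOneClass R] {s : Finset ι}
    {a b : ι → R} (ha : ∀ i ∈ s, ‖a i‖ ≤ 1) (hb : ∀ i ∈ s, ‖b i‖ ≤ 1) :
    ‖∏ i ∈ s, a i - ∏ i ∈ s, b i‖ ≤ ∑ i ∈ s, ‖a i - b i‖ := by
  induction s using Finset.cons_induction with
  | empty => simp
  | cons i s hi ih =>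
    simp only [Finset.forall_mem_cons] at ha hb
    have hprod : ‖∏ j ∈ s, a j‖ ≤ 1 := (Finset.norm_prod_le s a).trans
      (Finset.prod_le_one (fun _ _ => norm_nonneg _) ha.2)
    rw [Finset.prod_cons, Finset.prod_cons, Finset.sum_cons]
    calc ‖a i * ∏ j ∈ s, a j - b i * ∏ j ∈ s, b j‖
        = ‖(a i - b i) * ∏ j ∈ s, a j + b i * (∏ j ∈ s, a j - ∏ j ∈ s, b j)‖ := by ring_nf
      _ ≤ ‖a i - b i‖ * 1 + 1 * ∑ j ∈ s, ‖a j - b j‖ := norm_add_le_of_le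
          (norm_mul_le_of_le le_rfl hprod) (norm_mul_le_of_le hb.1 (ih ha.2 hb.2))
      _ = ‖a i - b i‖ + ∑ j ∈ s, ‖a j - b j‖ := by ring

lemma norm_one_add_sub_one_mul_le_one {z : ℂ} (hz : ‖z‖ ≤ 1) {x : ℝ} (hx0 : 0 ≤ x) (hx1 : x ≤ 1) :
    ‖1 + (z - 1) * (x : ℂ)‖ ≤ 1 := by
  calc ‖1 + (z - 1) * (x : ℂ)‖ = ‖((1 - x : ℝ) : ℂ) + z * (x : ℂ)‖ := by push_cast; ring_nf
    _ ≤ (1 - x) + 1 * x := norm_add_le_of_le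
        (by rw [Complex.norm_real, Real.norm_of_nonneg (sub_nonneg.2 hx1)])
        (norm_mul_le_of_le hz (by simp [abs_of_nonneg hx0]))
    _ = 1 := by ring

lemma norm_exp_sub_one_mul_le_one {z : ℂ} (hz : ‖z‖ ≤ 1) {x : ℝ} (hx : 0 ≤ x) :
    ‖Complex.exp ((z - 1) * (x : ℂ))‖ ≤ 1 := by
  rw [Complex.norm_exp, Real.exp_le_one_iff, Complex.re_mul_ofReal, Complex.sub_re, Complex.one_re]
  exact mul_nonpos_of_nonpos_of_nonneg (by linarith [Complex.re_le_norm z]) hx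

lemma norm_prod_sub_exp_le {P : Finset ℕ} (hP : ∀ p ∈ P, 2 ≤ p) {z : ℂ} (hz : ‖z‖ ≤ 1) :
    ‖∏ p ∈ P, (1 + (z - 1) * (p : ℂ)⁻¹) - Complex.exp ((z - 1) * ∑ p ∈ P, (p : ℂ)⁻¹)‖
      ≤ 2 * ‖z - 1‖ ^ 2 := by
  have hz2 : ‖z - 1‖ ≤ 2 := (norm_sub_le _ _).trans (by rw [norm_one]; linarith)
  have hfactor : ∀ p ∈ P, ‖1 + (z - 1) * (p : ℂ)⁻¹ - Complex.exp ((z - 1) * (p : ℂ)⁻¹)‖ ≤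
      ‖z - 1‖ ^ 2 * ((p : ℝ) ^ 2)⁻¹ := fun p hp => by
    have hp2 : (2 : ℝ) ≤ p := by exact_mod_cast hP p hp
    have hnorm : ‖(z - 1) * (p : ℂ)⁻¹‖ = ‖z - 1‖ * (p : ℝ)⁻¹ := by
      rw [norm_mul, norm_inv, Complex.norm_natCast]
    have hle : ‖(z - 1) * (p : ℂ)⁻¹‖ ≤ 1 := by
      rw [hnorm, mul_inv_le_iff₀ (by linarith)]
      linarith
    rw [norm_sub_rev, ← sub_sub, ← inv_pow, ← mul_pow, ← hnorm]
    exact Complex.norm_exp_sub_one_sub_id_le hle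
  rw [Finset.mul_sum, Complex.exp_sum]
  calc _ ≤ ∑ p ∈ P, ‖1 + (z - 1) * (p : ℂ)⁻¹ - Complex.exp ((z - 1) * (p : ℂ)⁻¹)‖ := by
        refine norm_prod_sub_prod_le (fun p hp => ?_) fun p _ => ?_
        · have hp1 : (1 : ℝ) ≤ p := by exact_mod_cast one_le_two.trans (hP p hp)
          simpa only [Complex.ofReal_inv, Complex.ofReal_natCast] using
            norm_one_add_sub_one_mul_le_one hz (by positivity) (inv_le_one_of_one_le₀ hp1)
        · simpa only [Complex.ofReal_inv, Complex.ofReal_natCast] using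
            norm_exp_sub_one_mul_le_one hz (x := (p : ℝ)⁻¹) (by positivity)
    _ ≤ ∑ p ∈ P, ‖z - 1‖ ^ 2 * ((p : ℝ) ^ 2)⁻¹ := Finset.sum_le_sum hfactor
    _ ≤ 2 * ‖z - 1‖ ^ 2 := by
        rw [← Finset.mul_sum, mul_comm]
        gcongr
        exact sum_inv_sq_le_two P

lemma omegaIn_eq_add_sdiff {P Q : Finset ℕ} (hPQ : P ⊆ Q) (n : ℕ) :
    omegaIn Q n = omegaIn P n + omegaIn (Q \ P) n := by
  rw [omegaIn, omegaIn, omegaIn, ← Finset.card_union_of_disjoint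
    (Finset.disjoint_filter_filter Finset.disjoint_sdiff), ← Finset.filter_union,
    Finset.union_sdiff_of_subset hPQ]

lemma omegaIn_primesLE {n N : ℕ} (hn : n ≠ 0) (hN : n ≤ N) :
    omegaIn (Nat.primesLE N) n = n.primeFactors.card := by
  rw [omegaIn]
  congr 1
  ext p
  simp only [Finset.mem_filter, Nat.mem_primesLE, Nat.mem_primeFactors]
  exact ⟨fun ⟨⟨_, hp⟩, hdvd⟩ => ⟨hp, hdvd, hn⟩,
    fun ⟨hp, hdvd, _⟩ => ⟨⟨(Nat.le_of_dvd (Nat.pos_of_ne_zero hn) hdvd).trans hN, hp⟩, hdvd⟩⟩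

lemma sum_omegaIn_le {X : ℝ} (hX : 0 ≤ X) (P : Finset ℕ) :
    ∑ n ∈ Finset.Ioc 0 ⌊X⌋₊, (omegaIn P n : ℝ) ≤ X * ∑ p ∈ P, (p : ℝ)⁻¹ := by
  have hswap : ∑ n ∈ Finset.Ioc 0 ⌊X⌋₊, omegaIn P n = ∑ p ∈ P, ⌊X⌋₊ / p := by
    simp_rw [omegaIn, Finset.card_filter]
    rw [Finset.sum_comm]
    simp_rw [← Finset.card_filter, Nat.Ioc_filter_dvd_card_eq_div]
  rw [← Nat.cast_sum, hswap, Nat.cast_sum, Finset.mul_sum]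
  refine Finset.sum_le_sum fun p _ => ?_
  rw [← Nat.floor_div_natCast, ← div_eq_mul_inv]
  exact Nat.floor_le (by positivity)

lemma norm_pow_sub_pow_add_le {R : Type*} [NormedCommRing R] [NormOneClass R] {z : R}
    (hz : ‖z‖ ≤ 1) (m k : ℕ) : ‖z ^ (m + k) - z ^ m‖ ≤ k * ‖z - 1‖ := by
  have hpow : ‖z ^ k - 1‖ ≤ k * ‖z - 1‖ := by
    simpa using norm_prod_sub_prod_le (s := Finset.range k) (a := fun _ => z) (b := fun _ => 1)
      (fun _ _ => hz) (fun _ _ => by simp)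
  calc ‖z ^ (m + k) - z ^ m‖ = ‖z ^ m * (z ^ k - 1)‖ := by ring_nf
    _ ≤ 1 * (k * ‖z - 1‖) := norm_mul_le_of_le ((norm_pow_le _ _).trans
        (pow_le_one₀ (norm_nonneg z) hz)) hpow
    _ = k * ‖z - 1‖ := one_mul _

lemma norm_mean_pow_card_primeFactors_sub_mean_pow_omegaIn_le {X Y : ℝ} (hYX : Y ≤ X) (hX : 0 < X)
    {z : ℂ} (hz : ‖z‖ ≤ 1) :
    ‖(X : ℂ)⁻¹ * ∑ n ∈ Finset.Ioc 0 ⌊X⌋₊, z ^ n.primeFactors.card -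
        (X : ℂ)⁻¹ * ∑ n ∈ Finset.Ioc 0 ⌊X⌋₊, z ^ omegaIn (Nat.primesLE ⌊Y⌋₊) n‖
      ≤ (primeRecipSum X - primeRecipSum Y) * ‖z - 1‖ := by
  have hsub : Nat.primesLE ⌊Y⌋₊ ⊆ Nat.primesLE ⌊X⌋₊ := Nat.primesLE_mono (Nat.floor_mono hYX)
  set Q := Nat.primesLE ⌊X⌋₊ \ Nat.primesLE ⌊Y⌋₊
  have hrecip : primeRecipSum X - primeRecipSum Y = ∑ p ∈ Q, (p : ℝ)⁻¹ := by
    rw [primeRecipSum, primeRecipSum, ← Finset.sum_sdiff hsub, add_sub_cancel_right]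
  rw [← mul_sub, ← Finset.sum_sub_distrib, norm_mul, norm_inv, Complex.norm_real,
    Real.norm_of_nonneg hX.le, inv_mul_le_iff₀ hX]
  calc _ ≤ ∑ n ∈ Finset.Ioc 0 ⌊X⌋₊, (omegaIn Q n : ℝ) * ‖z - 1‖ := by
        refine norm_sum_le_of_le _ fun n hn => ?_
        rw [Finset.mem_Ioc] at hn
        rw [← omegaIn_primesLE hn.1.ne' hn.2, omegaIn_eq_add_sdiff hsub]
        exact norm_pow_sub_pow_add_le hz _ _
    _ ≤ _ := by
        rw [← Finset.sum_mul, hrecip, ← mul_assoc]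
        gcongr
        exact sum_omegaIn_le hX.le Q

/-- The three errors come from discarding the primes in `(Y, X]`, from Rankin's trick, and from
replacing the Euler product by an exponential. -/
lemma norm_mean_pow_card_primeFactors_sub_exp_le {X Y : ℝ} (hY : Real.exp 1 ≤ Y) (hYX : Y ≤ X)
    {z : ℂ} (hz : ‖z‖ ≤ 1) :
    ‖(X : ℂ)⁻¹ * ∑ n ∈ Finset.Ioc 0 ⌊X⌋₊, z ^ n.primeFactors.card -
        Complex.exp ((z - 1) * primeRecipSum Y)‖
      ≤ (primeRecipSum X - primeRecipSum Y) * ‖z - 1‖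
        + Real.exp (-(Real.log X / Real.log Y) + 3 * ‖z - 1‖ * primeRecipSum Y)
        + 2 * ‖z - 1‖ ^ 2 := by
  have hX : 0 < X := (Real.exp_pos 1).trans_le (hY.trans hYX)
  have hdiscard := norm_mean_pow_card_primeFactors_sub_mean_pow_omegaIn_le hYX hX hz
  have hrankin := norm_mean_pow_omegaIn_primesLE_sub_prod_le hX hY (z - 1)
  have hexp := norm_prod_sub_exp_le (P := Nat.primesLE ⌊Y⌋₊)
    (fun _ => Nat.two_le_of_mem_primesLE) hz
  rw [add_sub_cancel] at hrankin
  have hcast : (primeRecipSum Y : ℂ) = ∑ p ∈ Nat.primesLE ⌊Y⌋₊, (p : ℂ)⁻¹ := by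
    simp [primeRecipSum]
  rw [hcast]
  exact (norm_sub_le_norm_sub_add_norm_sub _ _ _).trans (add_le_add
    ((norm_sub_le_norm_sub_add_norm_sub _ _ _).trans (add_le_add hdiscard hrankin)) hexp)

/-! ### The Erdős–Kac theorem for the positive integers -/

/-- The centred character `exp (i θ (ω(n) - log log X))`. -/
def ekTerm (θ X : ℝ) (n : ℕ) : ℂ :=
  Complex.exp (Complex.I * (θ * (n.primeFactors.card - loglog X) : ℝ))

/-- The mean over `1 ≤ n ≤ X` of the centred character `ekTerm θ X`, weighted by `f`. -/
def ekMean (f : ℕ → ℂ) (θ X : ℝ) : ℂ :=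
  (X : ℂ)⁻¹ * ∑ n ∈ Finset.Ioc 0 ⌊X⌋₊, f n * ekTerm θ X n

/-- The weight `f` has mean value `c`, and `ω` weighted by `f` obeys the Erdős–Kac law, expressed
through characteristic functions. The frequency `θ` may be any function of `X` with
`θ √(log log X) → t`, which makes the notion stable under dilations `X ↦ X / d`. -/
def HasErdosKacMean (f : ℕ → ℂ) (c : ℂ) : Prop :=
  ∀ (θ : ℝ → ℝ) (t : ℝ), Tendsto (fun X => θ X * √(loglog X)) atTop (𝓝 t) →
    Tendsto (fun X => ekMean f (θ X) X) atTop (𝓝 (c * Complex.exp (-(t : ℂ) ^ 2 / 2)))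

lemma norm_ekTerm (θ X : ℝ) (n : ℕ) : ‖ekTerm θ X n‖ = 1 := Complex.norm_exp_I_mul_ofReal _

section Frequency

variable {θ : ℝ → ℝ} {t : ℝ}

lemma tendsto_mul_of_tendsto_div_sqrt (hθ : Tendsto (fun X => θ X * √(loglog X)) atTop (𝓝 t))
    {g : ℝ → ℝ} {s : ℝ} (hg : Tendsto (fun X => g X / √(loglog X)) atTop (𝓝 s)) :
    Tendsto (fun X => θ X * g X) atTop (𝓝 (t * s)) := by
  refine (hθ.mul hg).congr' ?_
  filter_upwards [tendsto_loglog_atTop.eventually_gt_atTop 0] with X hX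
  have hsqrt : √(loglog X) ≠ 0 := (Real.sqrt_pos.2 hX).ne'
  field_simp

lemma tendsto_zero_of_tendsto_mul_sqrt
    (hθ : Tendsto (fun X => θ X * √(loglog X)) atTop (𝓝 t)) : Tendsto θ atTop (𝓝 0) := by
  simpa using tendsto_mul_of_tendsto_div_sqrt hθ (g := fun _ => 1) (s := 0)
    ((Real.tendsto_sqrt_atTop.comp tendsto_loglog_atTop).const_div_atTop 1)

lemma tendsto_sq_mul_loglog (hθ : Tendsto (fun X => θ X * √(loglog X)) atTop (𝓝 t)) :
    Tendsto (fun X => θ X ^ 2 * loglog X) atTop (𝓝 (t ^ 2)) := by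
  refine (hθ.pow 2).congr' ?_
  filter_upwards [tendsto_loglog_atTop.eventually_ge_atTop 0] with X hX
  rw [mul_pow, Real.sq_sqrt hX]

end Frequency

/-- The point `X ^ (1 / log log X)` beyond which the prime divisors of `n ≤ X` are discarded. -/
def truncPoint (X : ℝ) : ℝ := Real.exp (Real.log X / loglog X)

lemma log_truncPoint (X : ℝ) : Real.log (truncPoint X) = Real.log X / loglog X := Real.log_exp _

lemma tendsto_div_log_atTop : Tendsto (fun u : ℝ => u / Real.log u) atTop atTop := by
  have hinv : Tendsto (fun u : ℝ => Real.log u / u) atTop (𝓝[>] 0) := by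
    refine tendsto_nhdsWithin_iff.2 ⟨?_, ?_⟩
    · simpa using Real.isLittleO_log_id_atTop.tendsto_div_nhds_zero
    · filter_upwards [eventually_gt_atTop 1] with u hu
      exact div_pos (Real.log_pos hu) (by linarith)
  exact hinv.inv_tendsto_nhdsGT_zero.congr fun u => inv_div _ _

lemma tendsto_truncPoint_atTop : Tendsto truncPoint atTop atTop :=
  Real.tendsto_exp_atTop.comp (tendsto_div_log_atTop.comp Real.tendsto_log_atTop)

lemma truncPoint_le {X : ℝ} (hX : 1 < X) (hL : 1 ≤ loglog X) : truncPoint X ≤ X :=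
  (Real.exp_le_exp.2 (div_le_self (Real.log_pos hX).le hL)).trans_eq (Real.exp_log (by linarith))

lemma eventually_loglog_truncPoint :
    ∀ᶠ X in atTop, loglog (truncPoint X) = loglog X - Real.log (loglog X) := by
  filter_upwards [tendsto_loglog_atTop.eventually_gt_atTop 0,
    Real.tendsto_log_atTop.eventually_gt_atTop 0] with X hL hlog
  rw [loglog, log_truncPoint, Real.log_div hlog.ne' hL.ne', ← loglog]

lemma tendsto_primeRecipSum_truncPoint_sub_loglog :
    Tendsto (fun X => (primeRecipSum (truncPoint X) - loglog X) / √(loglog X)) atTop (𝓝 0) := by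
  have hlog : Tendsto (fun X => Real.log (loglog X) / √(loglog X)) atTop (𝓝 0) := by
    simpa [Real.sqrt_eq_rpow, Function.comp_def] using
      (isLittleO_log_rpow_atTop (one_half_pos (α := ℝ))).tendsto_div_nhds_zero.comp
        tendsto_loglog_atTop
  have hmertens : Tendsto (fun X => (primeRecipSum (truncPoint X) - loglog (truncPoint X)) /
      √(loglog X)) atTop (𝓝 0) := by
    refine squeeze_zero_norm' ?_ (tendsto_zero_iff_norm_tendsto_zero.1
      (tendsto_primeRecipSum_sub_loglog.comp tendsto_truncPoint_atTop))
    · filter_upwards [eventually_loglog_truncPoint, tendsto_loglog_atTop.eventually_ge_atTop 1,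
        (tendsto_loglog_atTop.comp tendsto_truncPoint_atTop).eventually_gt_atTop 0]
        with X hX hL (hY : 0 < loglog (truncPoint X))
      have hsqrt : 0 < √(loglog (truncPoint X)) := Real.sqrt_pos.2 hY
      have hle : loglog (truncPoint X) ≤ loglog X := by linarith [Real.log_nonneg hL]
      simp only [Function.comp, norm_div, Real.norm_of_nonneg (Real.sqrt_nonneg _)]
      exact div_le_div_of_nonneg_left (abs_nonneg _) hsqrt (Real.sqrt_le_sqrt hle)
  have hsub := hmertens.sub hlog
  rw [sub_zero] at hsub
  refine hsub.congr' ?_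
  filter_upwards [eventually_loglog_truncPoint] with X hX
  rw [hX, ← sub_div]
  ring_nf

lemma norm_exp_I_mul_sub_taylor_le {x : ℝ} (hx : |x| ≤ 1) :
    ‖Complex.exp (Complex.I * x) - 1 - Complex.I * x + (x : ℂ) ^ 2 / 2‖ ≤ |x| * x ^ 2 := by
  have hnorm : ‖Complex.I * (x : ℂ)‖ = |x| := by simp
  have hbound := Complex.exp_bound (x := Complex.I * x) (hnorm.trans_le hx)
    (n := 3) (by norm_num)
  simp only [Finset.sum_range_succ, Finset.sum_range_zero, hnorm] at hbound
  norm_num [Nat.factorial, mul_pow] at hbound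
  calc _ = ‖Complex.exp (Complex.I * x) - (1 + Complex.I * x + -(x : ℂ) ^ 2 / 2)‖ := by ring_nf
    _ ≤ |x| ^ 3 * (2 / 9) := hbound
    _ ≤ |x| ^ 3 := mul_le_of_le_one_right (by positivity) (by norm_num)
    _ = |x| * x ^ 2 := by rw [← sq_abs x]; ring

lemma tendsto_exp_I_mul_sub_one_mul_sub {α : Type*} {l : Filter α} {θ M L : α → ℝ} {t : ℝ}
    (hθ : Tendsto θ l (𝓝 0)) (hML : Tendsto (fun X => θ X * (M X - L X)) l (𝓝 0))
    (hL : Tendsto (fun X => θ X ^ 2 * L X) l (𝓝 (t ^ 2))) :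
    Tendsto (fun X => (Complex.exp (Complex.I * θ X) - 1) * M X - Complex.I * (θ X * L X : ℝ))
      l (𝓝 (-(t : ℂ) ^ 2 / 2)) := by
  have hM : Tendsto (fun X => θ X ^ 2 * M X) l (𝓝 (t ^ 2)) := by
    simpa using ((hθ.mul hML).add hL).congr fun X => by ring
  have htaylor : Tendsto (fun X => (Complex.exp (Complex.I * θ X) - 1 - Complex.I * θ X
      + (θ X : ℂ) ^ 2 / 2) * M X) l (𝓝 0) := by
    refine squeeze_zero_norm' ?_ (by simpa using hθ.abs.mul hM.abs :
      Tendsto (fun X => |θ X| * |θ X ^ 2 * M X|) l (𝓝 0))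
    filter_upwards [(tendsto_zero_iff_abs_tendsto_zero _).1 hθ |>.eventually (ge_mem_nhds one_pos)]
      with X hX
    rw [norm_mul, Complex.norm_real, Real.norm_eq_abs, abs_mul, abs_sq, ← mul_assoc]
    gcongr
    exact norm_exp_I_mul_sub_taylor_le hX
  have hsum := htaylor.add (((hML.ofReal).const_mul Complex.I).sub
    ((hM.ofReal).div_const 2))
  convert hsum using 2
  · push_cast; ring
  · push_cast; ring

lemma ekTerm_eq_pow (θ X : ℝ) (n : ℕ) : ekTerm θ X n =
    Complex.exp (Complex.I * (-(θ * loglog X) : ℝ)) *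
      Complex.exp (Complex.I * θ) ^ n.primeFactors.card := by
  rw [← Complex.exp_nat_mul, ← Complex.exp_add, ekTerm]
  congr 1; push_cast; ring

lemma norm_ekMean_one_sub_exp_le {X Y : ℝ} (hY : Real.exp 1 ≤ Y) (hYX : Y ≤ X) (θ : ℝ) :
    ‖ekMean 1 θ X - Complex.exp ((Complex.exp (Complex.I * θ) - 1) * primeRecipSum Y
        - Complex.I * (θ * loglog X : ℝ))‖
      ≤ |θ * (primeRecipSum X - primeRecipSum Y)|
        + Real.exp (-(Real.log X / Real.log Y) + 3 * |θ| * primeRecipSum Y) + 2 * θ ^ 2 := by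
  have hz : ‖Complex.exp (Complex.I * θ) - 1‖ ≤ |θ| := Real.norm_exp_I_mul_ofReal_sub_one_le
  have hmean : ekMean 1 θ X = Complex.exp (Complex.I * (-(θ * loglog X) : ℝ)) * ((X : ℂ)⁻¹ *
      ∑ n ∈ Finset.Ioc 0 ⌊X⌋₊, Complex.exp (Complex.I * θ) ^ n.primeFactors.card) := by
    simp only [ekMean, Pi.one_apply, one_mul, ekTerm_eq_pow, ← Finset.mul_sum]
    ring
  have hexp : Complex.exp ((Complex.exp (Complex.I * θ) - 1) * primeRecipSum Y
      - Complex.I * (θ * loglog X : ℝ)) = Complex.exp (Complex.I * (-(θ * loglog X) : ℝ)) *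
        Complex.exp ((Complex.exp (Complex.I * θ) - 1) * primeRecipSum Y) := by
    rw [← Complex.exp_add]; push_cast; ring_nf
  have hrecip : 0 ≤ primeRecipSum Y := Finset.sum_nonneg fun _ _ => by positivity
  have hmono : primeRecipSum Y ≤ primeRecipSum X := Finset.sum_le_sum_of_subset_of_nonneg
    (Nat.primesLE_mono (Nat.floor_mono hYX)) fun _ _ _ => by positivity
  rw [hmean, hexp, ← mul_sub, norm_mul, Complex.norm_exp_I_mul_ofReal, one_mul]
  refine (norm_mean_pow_card_primeFactors_sub_exp_le hY hYX
    (Complex.norm_exp_I_mul_ofReal θ).le).trans ?_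
  rw [mul_comm (primeRecipSum X - primeRecipSum Y), abs_mul, ← sq_abs θ,
    abs_of_nonneg (sub_nonneg.2 hmono)]
  gcongr

lemma tendsto_ekMean_error {θ M L : ℝ → ℝ} {l : Filter ℝ} (hθ : Tendsto θ l (𝓝 0))
    (hL : Tendsto L l atTop) (hML : Tendsto (fun X => θ X * (M X - L X)) l (𝓝 0)) :
    Tendsto (fun X => Real.exp (-L X + 3 * |θ X| * M X)) l (𝓝 0) := by
  have hmain : Tendsto (fun X => L X * (-1 + 3 * |θ X|)) l atBot := by
    refine hL.atTop_mul_neg (by norm_num : (-1 : ℝ) < 0) ?_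
    simpa using (hθ.abs.const_mul 3).const_add (-1)
  have hrest : Tendsto (fun X => 3 * |θ X| * (M X - L X)) l (𝓝 0) := by
    refine (tendsto_zero_iff_abs_tendsto_zero _).2 ?_
    simpa [Function.comp_def, abs_mul, mul_assoc] using hML.abs.const_mul 3
  exact Real.tendsto_exp_atBot.comp ((hmain.atBot_add hrest).congr fun X => by ring)

lemma hasErdosKacMean_one : HasErdosKacMean 1 1 := by
  intro θ t hθ
  have hθ0 := tendsto_zero_of_tendsto_mul_sqrt hθ
  have hX : Tendsto (fun X => θ X * (primeRecipSum X - loglog X)) atTop (𝓝 0) := by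
    simpa using tendsto_mul_of_tendsto_div_sqrt hθ tendsto_primeRecipSum_sub_loglog
  have hY : Tendsto (fun X => θ X * (primeRecipSum (truncPoint X) - loglog X)) atTop (𝓝 0) := by
    simpa using tendsto_mul_of_tendsto_div_sqrt hθ tendsto_primeRecipSum_truncPoint_sub_loglog
  have hdiscard : Tendsto (fun X => |θ X * (primeRecipSum X - primeRecipSum (truncPoint X))|)
      atTop (𝓝 0) := by
    refine (tendsto_zero_iff_abs_tendsto_zero _).1 ?_
    simpa [mul_sub] using hX.sub hY
  have herror := (hdiscard.add (tendsto_ekMean_error hθ0 tendsto_loglog_atTop hY)).add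
    ((hθ0.pow 2).const_mul 2)
  have hlim := (Complex.continuous_exp.tendsto _).comp
    (tendsto_exp_I_mul_sub_one_mul_sub hθ0 hY (tendsto_sq_mul_loglog hθ))
  rw [zero_pow two_ne_zero, mul_zero, add_zero, add_zero] at herror
  rw [one_mul]
  refine (tendsto_iff_of_dist (squeeze_zero' (Eventually.of_forall fun _ => dist_nonneg) ?_
    herror)).1 hlim
  filter_upwards [eventually_gt_atTop 1, tendsto_loglog_atTop.eventually_ge_atTop 1,
    tendsto_truncPoint_atTop.eventually_ge_atTop (Real.exp 1)] with X hX1 hL hY1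
  have hle := norm_ekMean_one_sub_exp_le hY1 (truncPoint_le hX1 hL) (θ X)
  have hlogX := Real.log_pos hX1
  rw [log_truncPoint, div_div_cancel₀ hlogX.ne'] at hle
  rwa [dist_comm, dist_eq_norm]

/-! ### Weights of the form `n ↦ ∑_{d ∣ n} w(d)` -/

lemma tendsto_loglog_sub_loglog_div {c : ℝ} (hc : 0 < c) :
    Tendsto (fun X => loglog X - loglog (X / c)) atTop (𝓝 0) := by
  have hfactor : Tendsto (fun X : ℝ => 1 - Real.log c / Real.log X) atTop (𝓝 1) := by
    simpa using (Real.tendsto_log_atTop.const_div_atTop (Real.log c)).const_sub 1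
  have hlog := ((Real.continuousAt_log one_ne_zero).tendsto.comp hfactor).neg
  rw [Real.log_one, neg_zero] at hlog
  refine hlog.congr' ?_
  filter_upwards [eventually_gt_atTop 0, Real.tendsto_log_atTop.eventually_gt_atTop 0,
    hfactor.eventually (lt_mem_nhds one_pos)] with X hX hlogX hpos
  have heq : Real.log (X / c) = Real.log X * (1 - Real.log c / Real.log X) := by
    rw [Real.log_div hX.ne' hc.ne']; field_simp
  simp only [Function.comp, loglog]
  rw [heq, Real.log_mul hlogX.ne' hpos.ne']
  ring

lemma card_primeFactors_mul_sub_le {d m : ℕ} (hd : d ≠ 0) (hm : m ≠ 0) :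
    |((d * m).primeFactors.card : ℝ) - m.primeFactors.card| ≤ d.primeFactors.card := by
  have hle : m.primeFactors.card ≤ (d.primeFactors ∪ m.primeFactors).card :=
    Finset.card_le_card Finset.subset_union_right
  rw [Nat.primeFactors_mul hd hm, abs_of_nonneg (sub_nonneg.2 (by exact_mod_cast hle)),
    sub_le_iff_le_add]
  exact_mod_cast Finset.card_union_le _ _

lemma norm_exp_I_mul_sub_exp_I_mul_le (a b : ℝ) :
    ‖Complex.exp (Complex.I * a) - Complex.exp (Complex.I * b)‖ ≤ |a - b| := by
  have hfactor : Complex.exp (Complex.I * a) - Complex.exp (Complex.I * b) =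
      Complex.exp (Complex.I * b) * (Complex.exp (Complex.I * (a - b : ℝ)) - 1) := by
    rw [mul_sub, ← Complex.exp_add, mul_one]
    congr 2; push_cast; ring
  rw [hfactor, norm_mul, Complex.norm_exp_I_mul_ofReal, one_mul]
  exact Real.norm_exp_I_mul_ofReal_sub_one_le

lemma norm_ekTerm_mul_sub_le {d m : ℕ} (hd : d ≠ 0) (hm : m ≠ 0) (θ X Y : ℝ) :
    ‖ekTerm θ X (d * m) - ekTerm θ Y m‖ ≤
      |θ| * (d.primeFactors.card + |loglog X - loglog Y|) := by
  refine (norm_exp_I_mul_sub_exp_I_mul_le _ _).trans ?_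
  rw [← mul_sub, abs_mul, sub_sub_sub_comm]
  gcongr
  exact (abs_sub _ _).trans (by gcongr; exact card_primeFactors_mul_sub_le hd hm)

/-- The indicator function of the multiples of `d`. -/
def multipleIndicator (d n : ℕ) : ℂ := if d ∣ n then 1 else 0

lemma sum_multipleIndicator_mul {d : ℕ} (hd : 0 < d) (N : ℕ) (g : ℕ → ℂ) :
    ∑ n ∈ Finset.Ioc 0 N, multipleIndicator d n * g n = ∑ m ∈ Finset.Ioc 0 (N / d), g (d * m) := by
  simp only [multipleIndicator, ite_mul, one_mul, zero_mul, ← Finset.sum_filter]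
  symm
  refine Finset.sum_bij (fun m _ => d * m) ?_ (fun a _ b _ h => Nat.eq_of_mul_eq_mul_left hd h)
    ?_ fun _ _ => rfl
  · intro m hm
    obtain ⟨hm0, hmN⟩ := Finset.mem_Ioc.1 hm
    exact Finset.mem_filter.2 ⟨Finset.mem_Ioc.2 ⟨Nat.mul_pos hd hm0,
      (Nat.mul_le_mul_left d hmN).trans (Nat.mul_div_le N d)⟩, dvd_mul_right d m⟩
  · intro n hn
    obtain ⟨hn, m, rfl⟩ := Finset.mem_filter.1 hn
    obtain ⟨hm0, hmN⟩ := Finset.mem_Ioc.1 hn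
    exact ⟨m, Finset.mem_Ioc.2 ⟨Nat.pos_of_mul_pos_left hm0,
      (Nat.le_div_iff_mul_le hd).2 (mul_comm d m ▸ hmN)⟩, rfl⟩

lemma ekMean_multipleIndicator {d : ℕ} (hd : 0 < d) (θ X : ℝ) :
    ekMean (multipleIndicator d) θ X =
      (X : ℂ)⁻¹ * ∑ m ∈ Finset.Ioc 0 ⌊X / d⌋₊, ekTerm θ X (d * m) := by
  rw [ekMean, sum_multipleIndicator_mul hd, Nat.floor_div_natCast]

lemma norm_inv_mul_sum_le {d : ℕ} {X B : ℝ} (hX : 0 < X) (hB : 0 ≤ B) {g : ℕ → ℂ}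
    (hg : ∀ m ∈ Finset.Ioc 0 ⌊X / d⌋₊, ‖g m‖ ≤ B) :
    ‖(X : ℂ)⁻¹ * ∑ m ∈ Finset.Ioc 0 ⌊X / d⌋₊, g m‖ ≤ B / d := by
  have hsum := Finset.sum_le_card_nsmul _ _ _ hg
  rw [Nat.card_Ioc, Nat.sub_zero, nsmul_eq_mul] at hsum
  calc ‖(X : ℂ)⁻¹ * ∑ m ∈ Finset.Ioc 0 ⌊X / d⌋₊, g m‖
      ≤ X⁻¹ * (⌊X / d⌋₊ * B) := by
        rw [norm_mul, norm_inv, Complex.norm_real, Real.norm_of_nonneg hX.le]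
        gcongr
        exact (norm_sum_le _ _).trans hsum
    _ ≤ X⁻¹ * (X / d * B) := by gcongr; exact Nat.floor_le (by positivity)
    _ = B / d := by field_simp

lemma norm_ekMean_multipleIndicator_le {X : ℝ} (hX : 0 < X) (d : ℕ) (θ : ℝ) :
    ‖ekMean (multipleIndicator d) θ X‖ ≤ (d : ℝ)⁻¹ := by
  rcases d.eq_zero_or_pos with rfl | hd
  · have hzero : ∀ n ∈ Finset.Ioc 0 ⌊X⌋₊, multipleIndicator 0 n * ekTerm θ X n = 0 := by
      intro n hn
      simp [multipleIndicator, (Finset.mem_Ioc.1 hn).1.ne']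
    simp [ekMean, Finset.sum_eq_zero hzero]
  · rw [ekMean_multipleIndicator hd]
    exact (norm_inv_mul_sum_le hX zero_le_one fun m _ => (norm_ekTerm _ _ _).le).trans_eq
      (one_div _)

lemma norm_ekMean_multipleIndicator_sub_le {X : ℝ} (hX : 0 < X) {d : ℕ} (hd : 0 < d) (θ : ℝ) :
    ‖ekMean (multipleIndicator d) θ X - (d : ℂ)⁻¹ * ekMean 1 θ (X / d)‖ ≤
      |θ| * (d.primeFactors.card + |loglog X - loglog (X / d)|) / d := by
  have hdC : (d : ℂ) ≠ 0 := by exact_mod_cast hd.ne'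
  have hmean : (d : ℂ)⁻¹ * ekMean 1 θ (X / d) =
      (X : ℂ)⁻¹ * ∑ m ∈ Finset.Ioc 0 ⌊X / d⌋₊, ekTerm θ (X / d) m := by
    simp only [ekMean, Pi.one_apply, one_mul, ← mul_assoc]
    push_cast
    field_simp
  rw [ekMean_multipleIndicator hd, hmean, ← mul_sub, ← Finset.sum_sub_distrib]
  exact norm_inv_mul_sum_le hX (by positivity) fun m hm =>
    norm_ekTerm_mul_sub_le hd.ne' (Finset.mem_Ioc.1 hm).1.ne' _ _ _

lemma tendsto_comp_mul_mul_sqrt {θ : ℝ → ℝ} {t c : ℝ} (hc : 0 < c)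
    (hθ : Tendsto (fun X => θ X * √(loglog X)) atTop (𝓝 t)) :
    Tendsto (fun X => θ (c * X) * √(loglog X)) atTop (𝓝 t) := by
  have hratio : Tendsto (fun X => √(loglog (X / c)) / √(loglog X)) atTop (𝓝 1) := by
    have hquot := ((tendsto_loglog_sub_loglog_div hc).div_atTop tendsto_loglog_atTop).const_sub 1
    rw [sub_zero] at hquot
    have hsqrt := (Real.continuous_sqrt.tendsto 1).comp hquot
    rw [Real.sqrt_one] at hsqrt
    refine hsqrt.congr' ?_
    filter_upwards [tendsto_loglog_atTop.eventually_gt_atTop 0] with X hX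
    rw [Function.comp, ← Real.sqrt_div' _ hX.le]
    congr 1
    field_simp
    ring
  have hscaled := tendsto_mul_of_tendsto_div_sqrt hθ hratio
  rw [mul_one] at hscaled
  refine (hscaled.comp (tendsto_id.const_mul_atTop hc)).congr fun X => ?_
  simp only [Function.comp, id, mul_div_cancel_left₀ _ hc.ne']

/-- Replacing `n` by `d n` changes `ω` by `O(1)` and `log log X` by `o(1)`, neither of which is
visible on the scale `√(log log X)`. -/
lemma hasErdosKacMean_multipleIndicator (d : ℕ) :
    HasErdosKacMean (multipleIndicator d) (d : ℂ)⁻¹ := by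
  intro θ t hθ
  rcases d.eq_zero_or_pos with rfl | hd
  · have hzero : ∀ᶠ X in atTop, ekMean (multipleIndicator 0) (θ X) X = 0 := by
      filter_upwards [eventually_gt_atTop 0] with X hX
      simpa using norm_ekMean_multipleIndicator_le hX 0 (θ X)
    simpa using tendsto_nhds_of_eventually_eq hzero
  have hd' : (0 : ℝ) < d := by exact_mod_cast hd
  have hdiv : Tendsto (fun X : ℝ => X / d) atTop atTop := tendsto_id.atTop_div_const hd'
  have hmain := ((hasErdosKacMean_one _ t (tendsto_comp_mul_mul_sqrt hd' hθ)).comp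
    hdiv).const_mul (d : ℂ)⁻¹
  have herror : Tendsto (fun X => |θ X| * (d.primeFactors.card +
      |loglog X - loglog (X / d)|) / d) atTop (𝓝 0) := by
    simpa using ((tendsto_zero_of_tendsto_mul_sqrt hθ).abs.mul
      ((tendsto_loglog_sub_loglog_div hd').abs.const_add
        (d.primeFactors.card : ℝ))).div_const (d : ℝ)
  rw [one_mul] at hmain
  refine (tendsto_iff_of_dist (squeeze_zero' (Eventually.of_forall fun _ => dist_nonneg) ?_
    herror)).1 hmain
  filter_upwards [eventually_gt_atTop 0] with X hX
  rw [dist_comm, dist_eq_norm, Function.comp, mul_div_cancel₀ X hd'.ne']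
  exact norm_ekMean_multipleIndicator_sub_le hX hd (θ X)

section TSum

variable {ι : Type*} {w : ι → ℂ} {d : ι → ℕ}

lemma summable_mul_multipleIndicator (hw : Summable fun i => ‖w i‖ / d i) {n : ℕ} (hn : 0 < n) :
    Summable fun i => w i * multipleIndicator (d i) n := by
  refine (hw.mul_left (n : ℝ)).of_norm_bounded fun i => ?_
  rw [multipleIndicator]
  split_ifs with hdvd
  · have hdi : (0 : ℝ) < d i := by exact_mod_cast Nat.pos_of_dvd_of_pos hdvd hn
    have hle : (d i : ℝ) ≤ n := by exact_mod_cast Nat.le_of_dvd hn hdvd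
    rw [mul_one, ← mul_div_assoc, le_div_iff₀ hdi, mul_comm]
    gcongr
  · simpa using by positivity

lemma ekMean_tsum (hw : Summable fun i => ‖w i‖ / d i) (θ X : ℝ) :
    ekMean (fun n => ∑' i, w i * multipleIndicator (d i) n) θ X =
      ∑' i, w i * ekMean (multipleIndicator (d i)) θ X := by
  have hsum : ∀ n ∈ Finset.Ioc 0 ⌊X⌋₊,
      Summable fun i => w i * multipleIndicator (d i) n * ekTerm θ X n := fun n hn =>
    (summable_mul_multipleIndicator hw (Finset.mem_Ioc.1 hn).1).mul_right _
  simp only [ekMean, ← tsum_mul_right]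
  rw [← Summable.tsum_finsetSum hsum, ← tsum_mul_left]
  refine tsum_congr fun i => ?_
  simp only [mul_assoc, ← Finset.mul_sum]
  ring

/-- A version of Wintner's mean value theorem for `ekMean`. -/
lemma hasErdosKacMean_tsum (hw : Summable fun i => ‖w i‖ / d i) :
    HasErdosKacMean (fun n => ∑' i, w i * multipleIndicator (d i) n) (∑' i, w i / d i) := by
  intro θ t hθ
  simp only [ekMean_tsum hw, div_eq_mul_inv (w _), ← tsum_mul_right, mul_assoc]
  refine tendsto_tsum_of_dominated_convergence hw
    (fun i => (hasErdosKacMean_multipleIndicator (d i) θ t hθ).const_mul _) ?_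
  filter_upwards [eventually_gt_atTop 0] with X hX i
  rw [norm_mul, div_eq_mul_inv]
  gcongr
  exact norm_ekMean_multipleIndicator_le hX (d i) (θ X)

end TSum

namespace HasErdosKacMean

variable {f g : ℕ → ℂ} {c c' : ℂ}

lemma congr (hf : HasErdosKacMean f c) (hfg : ∀ n, 0 < n → f n = g n) : HasErdosKacMean g c := by
  intro θ t hθ
  refine (hf θ t hθ).congr fun X => ?_
  rw [ekMean, ekMean, Finset.sum_congr rfl fun n hn => ?_]
  rw [hfg n (Finset.mem_Ioc.1 hn).1]

lemma add (hf : HasErdosKacMean f c) (hg : HasErdosKacMean g c') :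
    HasErdosKacMean (f + g) (c + c') := by
  intro θ t hθ
  rw [add_mul]
  refine ((hf θ t hθ).add (hg θ t hθ)).congr fun X => ?_
  simp only [ekMean, Pi.add_apply, add_mul, Finset.sum_add_distrib, mul_add]

lemma const_mul (hf : HasErdosKacMean f c) (k : ℂ) :
    HasErdosKacMean (fun n => k * f n) (k * c) := by
  intro θ t hθ
  rw [mul_assoc]
  refine ((hf θ t hθ).const_mul k).congr fun X => ?_
  simp only [ekMean, mul_assoc, ← Finset.mul_sum]
  ring

lemma sub (hf : HasErdosKacMean f c) (hg : HasErdosKacMean g c') :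
    HasErdosKacMean (f - g) (c - c') := by
  simpa [sub_eq_add_neg, Pi.neg_def] using hf.add (hg.const_mul (-1))

end HasErdosKacMean

lemma hasErdosKacMean_single (k : ℕ) : HasErdosKacMean (Pi.single k 1) 0 := by
  intro θ t _
  rw [zero_mul]
  refine squeeze_zero_norm' ?_ tendsto_inv_atTop_zero
  filter_upwards [eventually_gt_atTop 0] with X hX
  simp only [ekMean, Pi.single_apply, ite_mul, one_mul, zero_mul, Finset.sum_ite_eq']
  rw [norm_mul, norm_inv, Complex.norm_real, Real.norm_of_nonneg hX.le]
  refine mul_le_of_le_one_right (by positivity) ?_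
  split_ifs
  · exact (norm_ekTerm _ _ _).le
  · simp

/-! ### Squarefree numbers -/

open ArithmeticFunction.Moebius in
lemma tsum_moebius_div_sq : ∑' a : ℕ, (μ a : ℂ) / (a : ℂ) ^ 2 = (riemannZeta 2)⁻¹ := by
  have hone : 1 < (2 : ℂ).re := by norm_num
  rw [← eq_inv_of_mul_eq_one_right (ArithmeticFunction.LSeries_zeta_eq_riemannZeta hone ▸
    ArithmeticFunction.LSeries_zeta_mul_Lseries_moebius hone)]
  refine tsum_congr fun a => ?_
  rcases eq_or_ne a 0 with rfl | ha
  · simp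
  · rw [LSeries.term_of_ne_zero ha, Complex.cpow_ofNat]

lemma sq_dvd_sq_mul_iff {a b s : ℕ} (hs : Squarefree s) : a ^ 2 ∣ b ^ 2 * s ↔ a ∣ b := by
  refine ⟨fun h => ?_, fun h => (pow_dvd_pow_of_dvd h 2).mul_right s⟩
  obtain ⟨a', b', hcop, ha, hb⟩ := Nat.exists_coprime a b
  generalize a.gcd b = g at ha hb
  subst ha hb
  rcases g.eq_zero_or_pos with rfl | hg
  · simp
  rw [mul_pow, mul_pow, mul_right_comm, Nat.mul_dvd_mul_iff_right (by positivity)] at h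
  have hdvd : a' * a' ∣ s := sq a' ▸ (hcop.pow 2 2).dvd_of_dvd_mul_left h
  rw [Nat.isUnit_iff.1 (hs a' hdvd), one_mul]
  exact dvd_mul_left g b'

open ArithmeticFunction.Moebius in
lemma tsum_moebius_mul_multipleIndicator {n : ℕ} (hn : n ≠ 0) :
    ∑' a : ℕ, (μ a : ℂ) * multipleIndicator (a ^ 2) n = if Squarefree n then 1 else 0 := by
  obtain ⟨s, b, rfl, hs⟩ := Nat.sq_mul_squarefree n
  have hb : b ≠ 0 := by rintro rfl; simp at hn
  have hsq : Squarefree (b ^ 2 * s) ↔ b = 1 := by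
    refine ⟨fun h => Nat.isUnit_iff.1 (h b (by rw [← sq]; exact dvd_mul_right _ _)), ?_⟩
    rintro rfl
    simpa using hs
  have hsum : ∑ a ∈ b.divisors, μ a = if b = 1 then 1 else 0 := by
    rw [← ArithmeticFunction.coe_zeta_mul_apply, ArithmeticFunction.coe_zeta_mul_moebius,
      ArithmeticFunction.one_apply]
  simp only [multipleIndicator, sq_dvd_sq_mul_iff hs, mul_ite, mul_one, mul_zero, hsq]
  rw [tsum_eq_sum (s := b.divisors) fun a ha => if_neg fun hab => ha (Nat.mem_divisors.2 ⟨hab, hb⟩),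
    Finset.sum_congr rfl fun a ha => if_pos (Nat.dvd_of_mem_divisors ha)]
  exact_mod_cast hsum

/-- The indicator function of the numbers `k * m` with `m` squarefree. -/
def squarefreeMultipleIndicator (k n : ℕ) : ℂ := if k ∣ n ∧ Squarefree (n / k) then 1 else 0

open ArithmeticFunction.Moebius in
lemma tsum_moebius_mul_multipleIndicator_mul {n : ℕ} (hn : n ≠ 0) (k : ℕ) :
    ∑' a : ℕ, (μ a : ℂ) * multipleIndicator (k * a ^ 2) n = squarefreeMultipleIndicator k n := by
  by_cases hk : k ∣ n
  · obtain ⟨m, rfl⟩ := hk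
    obtain ⟨hk0, hm0⟩ := mul_ne_zero_iff.1 hn
    rw [squarefreeMultipleIndicator, Nat.mul_div_cancel_left _ (Nat.pos_of_ne_zero hk0)]
    simp only [dvd_mul_right, true_and, ← tsum_moebius_mul_multipleIndicator hm0,
      multipleIndicator, Nat.mul_dvd_mul_iff_left (Nat.pos_of_ne_zero hk0)]
  · have hnot : ∀ a, ¬ k * a ^ 2 ∣ n := fun a h => hk (dvd_of_mul_right_dvd h)
    simp [squarefreeMultipleIndicator, multipleIndicator, hk, hnot]

open ArithmeticFunction.Moebius in
lemma hasErdosKacMean_squarefreeMultipleIndicator (k : ℕ) :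
    HasErdosKacMean (squarefreeMultipleIndicator k) ((riemannZeta 2)⁻¹ / k) := by
  have hle (a : ℕ) : ‖‖(μ a : ℂ)‖ / (k * a ^ 2 : ℕ)‖ ≤ (k : ℝ)⁻¹ * ((a : ℝ) ^ 2)⁻¹ := by
    have hμ : ‖(μ a : ℂ)‖ ≤ 1 := by
      rw [Complex.norm_intCast]; exact_mod_cast ArithmeticFunction.abs_moebius_le_one
    rw [Real.norm_of_nonneg (by positivity), ← mul_inv, ← one_div]
    push_cast
    gcongr
  have hsum : Summable fun a : ℕ => ‖(μ a : ℂ)‖ / (k * a ^ 2 : ℕ) :=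
    ((Real.summable_nat_pow_inv.2 one_lt_two).mul_left (k : ℝ)⁻¹).of_norm_bounded hle
  have hmean : ∑' a : ℕ, (μ a : ℂ) / (k * a ^ 2 : ℕ) = (riemannZeta 2)⁻¹ / k := by
    rw [← tsum_moebius_div_sq, ← tsum_div_const]
    refine tsum_congr fun a => ?_
    push_cast
    rw [div_div, mul_comm]
  rw [← hmean]
  exact (hasErdosKacMean_tsum hsum).congr fun n hn =>
    tsum_moebius_mul_multipleIndicator_mul hn.ne' k

/-! ### Fundamental discriminants -/

lemma isFundamentalDiscriminant_four_mul (m : ℤ) :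
    IsFundamentalDiscriminant (4 * m) ↔ (m % 4 = 2 ∨ m % 4 = 3) ∧ Squarefree m := by
  constructor
  · rintro ⟨-, ⟨h, -⟩ | ⟨k, hk, h⟩⟩
    · lia
    · obtain rfl : m = k := by lia
      exact h
  · exact fun h => ⟨by lia, Or.inr ⟨m, rfl, h⟩⟩

lemma isFundamentalDiscriminant_of_not_dvd {D : ℤ} (hD : ¬ (4 : ℤ) ∣ D) :
    IsFundamentalDiscriminant D ↔ D ≠ 1 ∧ D % 4 = 1 ∧ Squarefree D := by
  constructor
  · rintro ⟨h1, h | ⟨m, rfl, -⟩⟩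
    · exact ⟨h1, h⟩
    · exact absurd (Dvd.intro _ rfl) hD
  · exact fun h => ⟨h.1, Or.inl h.2⟩

lemma IsFundamentalDiscriminant.one_lt_abs {D : ℤ} (h : IsFundamentalDiscriminant D) :
    1 < |D| := by
  by_contra! hD
  obtain rfl | rfl | rfl : D = 0 ∨ D = 1 ∨ D = -1 := by rw [abs_le] at hD; lia
  · rw [← mul_zero (4 : ℤ), isFundamentalDiscriminant_four_mul] at h
    exact not_squarefree_zero h.2
  · exact h.1 rfl
  · rw [isFundamentalDiscriminant_of_not_dvd (by decide)] at h
    lia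

open Classical in
lemma card_fundamentalDiscriminant_natAbs_eq {n : ℕ} (hn : n ≠ 0) :
    Nat.card {D : ℤ // IsFundamentalDiscriminant D ∧ D.natAbs = n} =
      (if IsFundamentalDiscriminant n then 1 else 0) +
        (if IsFundamentalDiscriminant (-n) then 1 else 0) := by
  rw [Nat.subtype_card (({(n : ℤ), -(n : ℤ)} : Finset ℤ).filter IsFundamentalDiscriminant)
    fun D => by rw [Finset.mem_filter, Finset.mem_insert, Finset.mem_singleton,
      ← Int.natAbs_eq_iff, and_comm], Finset.card_filter, Finset.sum_pair (by lia)]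

lemma squarefree_two_mul_iff (m : ℕ) : Squarefree (2 * m) ↔ Odd m ∧ Squarefree m := by
  rw [Nat.squarefree_mul_iff, Nat.coprime_two_left]
  exact ⟨fun h => ⟨h.1, h.2.2⟩, fun h => ⟨h.1, Nat.prime_two.prime.squarefree, h.2⟩⟩

lemma squarefree_neg_natCast (n : ℕ) : Squarefree (-(n : ℤ)) ↔ Squarefree n := by
  rw [← Int.squarefree_natAbs, Int.natAbs_neg, Int.natAbs_natCast]

lemma squarefreeMultipleIndicator_mul {k : ℕ} (hk : 0 < k) (m : ℕ) :
    squarefreeMultipleIndicator k (k * m) = if Squarefree m then 1 else 0 := by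
  rw [squarefreeMultipleIndicator, Nat.mul_div_cancel_left _ hk]
  simp only [dvd_mul_right, true_and]

lemma squarefreeMultipleIndicator_one (n : ℕ) :
    squarefreeMultipleIndicator 1 n = if Squarefree n then 1 else 0 := by
  simpa using squarefreeMultipleIndicator_mul one_pos n

lemma squarefreeMultipleIndicator_of_not_dvd {k n : ℕ} (h : ¬ k ∣ n) :
    squarefreeMultipleIndicator k n = 0 := if_neg fun h' => h h'.1

lemma mod_four_ne_zero_of_squarefree {n : ℕ} (hn : Squarefree n) : n % 4 ≠ 0 := by
  intro h
  obtain ⟨m, rfl⟩ := Nat.dvd_of_mod_eq_zero h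
  simpa using hn 2 (Dvd.intro m rfl)

lemma card_fundamentalDiscriminant_natAbs_eq_four_mul {m : ℕ} (hm : m ≠ 0) :
    (Nat.card {D : ℤ // IsFundamentalDiscriminant D ∧ D.natAbs = 4 * m} : ℂ) =
      squarefreeMultipleIndicator 1 (4 * m) - squarefreeMultipleIndicator 2 (4 * m) +
        2 * squarefreeMultipleIndicator 4 (4 * m) := by
  have htwo : squarefreeMultipleIndicator 2 (4 * m) =
      if Odd m ∧ Squarefree m then 1 else 0 := by
    simp only [← squarefree_two_mul_iff, ← squarefreeMultipleIndicator_mul two_pos, ← mul_assoc,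
      Nat.reduceMul]
  have hone : ¬ Squarefree (4 * m) := fun h => mod_four_ne_zero_of_squarefree h (by simp)
  have hneg := isFundamentalDiscriminant_four_mul (-m)
  rw [squarefree_neg_natCast, mul_neg] at hneg
  rw [card_fundamentalDiscriminant_natAbs_eq (by lia), squarefreeMultipleIndicator_one,
    squarefreeMultipleIndicator_mul four_pos, htwo]
  push_cast
  simp only [isFundamentalDiscriminant_four_mul, Int.squarefree_natCast, hneg, hone, if_false]
  by_cases hs : Squarefree m
  · have hmod := mod_four_ne_zero_of_squarefree hs
    simp only [hs, and_true, Nat.odd_iff, if_true]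
    split_ifs <;> first | lia | norm_num
  · simp [hs]

lemma card_fundamentalDiscriminant_natAbs_eq_of_not_dvd {n : ℕ} (hn : ¬ 4 ∣ n) :
    (Nat.card {D : ℤ // IsFundamentalDiscriminant D ∧ D.natAbs = n} : ℂ) =
      squarefreeMultipleIndicator 1 n - squarefreeMultipleIndicator 2 n -
        if n = 1 then 1 else 0 := by
  have htwo : squarefreeMultipleIndicator 2 n = if Even n ∧ Squarefree n then 1 else 0 := by
    rcases n.even_or_odd' with ⟨m, rfl | rfl⟩
    · have hm : Odd m := by rw [Nat.odd_iff]; lia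
      simp [squarefreeMultipleIndicator_mul two_pos, squarefree_two_mul_iff, hm]
    · rw [squarefreeMultipleIndicator_of_not_dvd (by lia), if_neg]
      simp
  rw [card_fundamentalDiscriminant_natAbs_eq (by lia), squarefreeMultipleIndicator_one, htwo,
    isFundamentalDiscriminant_of_not_dvd (by lia), isFundamentalDiscriminant_of_not_dvd (by lia),
    squarefree_neg_natCast, Int.squarefree_natCast]
  by_cases hs : Squarefree n
  · simp only [hs, and_true, Nat.even_iff, if_true]
    push_cast
    split_ifs <;> first | lia | norm_num
  · have hn1 : n ≠ 1 := by rintro rfl; exact hs squarefree_one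
    simp [hs, hn1]

/-- Up to the exclusion of `D = 1`, the fundamental discriminants of absolute value `n` are counted
by `μ²(n) - μ²(n / 2) + 2 μ²(n / 4)`, where `μ²` vanishes off the integers. -/
lemma hasErdosKacMean_card_fundamentalDiscriminant :
    HasErdosKacMean
      (fun n => (Nat.card {D : ℤ // IsFundamentalDiscriminant D ∧ D.natAbs = n} : ℂ))
      (riemannZeta 2)⁻¹ := by
  have hq := hasErdosKacMean_squarefreeMultipleIndicator
  have hmean := (((hq 1).sub (hq 2)).add ((hq 4).const_mul 2)).sub (hasErdosKacMean_single 1)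
  convert hmean.congr fun n hn => ?_ using 1
  · push_cast; ring
  · by_cases h4 : 4 ∣ n
    · obtain ⟨m, rfl⟩ := h4
      rw [card_fundamentalDiscriminant_natAbs_eq_four_mul (by lia)]
      have h1 : 4 * m ≠ 1 := by lia
      simp [h1]
    · rw [card_fundamentalDiscriminant_natAbs_eq_of_not_dvd h4]
      simp [squarefreeMultipleIndicator_of_not_dvd h4, Pi.single_apply]

/-! ### From characteristic functions to distribution functions -/

/-- The uniform probability measure on the values of `f` on `s`, or the Dirac mass at `0` if `s` is
empty. -/
def empiricalMeasure {ι : Type*} (s : Finset ι) (f : ι → ℝ) : Measure ℝ :=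
  if s.Nonempty then (s.card : ENNReal)⁻¹ • ∑ i ∈ s, Measure.dirac (f i) else Measure.dirac 0

section EmpiricalMeasure

variable {ι : Type*} {s : Finset ι}

instance isProbabilityMeasure_empiricalMeasure (s : Finset ι) (f : ι → ℝ) :
    IsProbabilityMeasure (empiricalMeasure s f) := by
  rw [empiricalMeasure]
  split_ifs with hs
  · constructor
    simp only [Measure.smul_apply, Measure.finsetSum_apply, measure_univ, Finset.sum_const,
      nsmul_eq_mul, mul_one, smul_eq_mul]
    exact ENNReal.inv_mul_cancel (by simpa using hs.ne_empty) (ENNReal.natCast_ne_top _)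
  · infer_instance

lemma charFun_empiricalMeasure (hs : s.Nonempty) (f : ι → ℝ) (t : ℝ) :
    charFun (empiricalMeasure s f) t =
      (s.card : ℂ)⁻¹ * ∑ i ∈ s, Complex.exp (t * f i * Complex.I) := by
  rw [charFun_apply_real, empiricalMeasure, if_pos hs, integral_smul_measure,
    integral_finsetSum_measure fun i _ => integrable_dirac (by simp)]
  simp

open Classical in
lemma empiricalMeasure_real_Iic (hs : s.Nonempty) (f : ι → ℝ) (z : ℝ) :
    (empiricalMeasure s f).real (Set.Iic z) =
      ((s.filter fun i => f i ≤ z).card : ℝ) / s.card := by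
  rw [empiricalMeasure, if_pos hs, measureReal_def, Measure.smul_apply, Measure.finsetSum_apply,
    Finset.card_filter, div_eq_inv_mul, smul_eq_mul, ENNReal.toReal_mul, ENNReal.toReal_inv,
    ENNReal.toReal_natCast, ENNReal.toReal_sum fun _ _ => measure_ne_top _ _]
  push_cast
  congr 1
  refine Finset.sum_congr rfl fun i _ => ?_
  rw [Measure.dirac_apply' _ measurableSet_Iic, Set.indicator_apply]
  by_cases hi : f i ≤ z <;> simp [hi]

end EmpiricalMeasure

lemma gaussCDF_eq_gaussianReal_real_Iic (z : ℝ) :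
    gaussCDF z = (ProbabilityTheory.gaussianReal 0 1).real (Set.Iic z) := by
  rw [measureReal_def, ProbabilityTheory.gaussianReal_apply_eq_integral _ one_ne_zero,
    ENNReal.toReal_ofReal, gaussCDF, ← integral_const_mul]
  · simp [ProbabilityTheory.gaussianPDFReal]
  · exact integral_nonneg fun x => ProbabilityTheory.gaussianPDFReal_nonneg _ _ _

/-- Lévy's continuity theorem for a standard Gaussian limit, which has no atoms, so that every `z`
is a continuity point. -/
lemma tendsto_measureReal_Iic_gaussCDF {α : Type*} {l : Filter α} [l.IsCountablyGenerated]
    {ν : α → ProbabilityMeasure ℝ}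
    (hν : ∀ t : ℝ, Tendsto (fun a => charFun (ν a : Measure ℝ) t) l
      (𝓝 (Complex.exp (-(t : ℂ) ^ 2 / 2)))) (z : ℝ) :
    Tendsto (fun a => (ν a : Measure ℝ).real (Set.Iic z)) l (𝓝 (gaussCDF z)) := by
  let γ : ProbabilityMeasure ℝ := ⟨ProbabilityTheory.gaussianReal 0 1, inferInstance⟩
  have hγ (t : ℝ) : charFun (γ : Measure ℝ) t = Complex.exp (-(t : ℂ) ^ 2 / 2) := by
    rw [show (γ : Measure ℝ) = ProbabilityTheory.gaussianReal 0 1 from rfl,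
      ProbabilityTheory.charFun_gaussianReal]
    push_cast
    ring_nf
  have hatom : (γ : Measure ℝ) (frontier (Set.Iic z)) = 0 := by
    have := ProbabilityTheory.nullSingletonClass_gaussianReal (μ := 0) (v := 1) one_ne_zero
    rw [frontier_Iic]
    exact measure_singleton (μ := ProbabilityTheory.gaussianReal 0 1) z
  rw [gaussCDF_eq_gaussianReal_real_Iic]
  refine tendsto_of_seq_tendsto fun u hu => ?_
  have hlevy : Tendsto (ν ∘ u) atTop (𝓝 γ) :=
    ProbabilityMeasure.tendsto_of_tendsto_charFun fun t => (hγ t).symm ▸ (hν t).comp hu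
  exact (ENNReal.tendsto_toReal (measure_ne_top _ _)).comp
    (ProbabilityMeasure.tendsto_measure_of_null_frontier_of_tendsto' hlevy hatom)

section Counting

variable {α : Type*} {P : α → Prop} {N : α → ℕ} {s : ℕ → Finset α} {c : ℂ}

lemma ekMean_card_fiber (hN : ∀ a, P a → 0 < N a) (hs : ∀ M a, a ∈ s M ↔ P a ∧ N a ≤ M)
    (θ X : ℝ) :
    ekMean (fun n => (Nat.card {a // P a ∧ N a = n} : ℂ)) θ X =
      (X : ℂ)⁻¹ * ∑ a ∈ s ⌊X⌋₊, ekTerm θ X (N a) := by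
  have hmaps : ∀ a ∈ s ⌊X⌋₊, N a ∈ Finset.Ioc 0 ⌊X⌋₊ := fun a ha => by
    obtain ⟨hP, hle⟩ := (hs _ a).1 ha
    exact Finset.mem_Ioc.2 ⟨hN a hP, hle⟩
  rw [ekMean, ← Finset.sum_fiberwise_of_maps_to hmaps]
  congr 1
  refine Finset.sum_congr rfl fun n hn => ?_
  rw [Finset.sum_congr rfl fun a ha => by rw [(Finset.mem_filter.1 ha).2], Finset.sum_const,
    nsmul_eq_mul, Nat.subtype_card ((s ⌊X⌋₊).filter fun a => N a = n)]
  intro a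
  rw [Finset.mem_filter, hs]
  have hle := (Finset.mem_Ioc.1 hn).2
  exact ⟨fun h => ⟨h.1.1, h.2⟩, fun h => ⟨⟨h.1, h.2.trans_le hle⟩, h.2⟩⟩

lemma tendsto_inv_mul_card (hN : ∀ a, P a → 0 < N a) (hs : ∀ M a, a ∈ s M ↔ P a ∧ N a ≤ M)
    (hmean : HasErdosKacMean (fun n => (Nat.card {a // P a ∧ N a = n} : ℂ)) c) :
    Tendsto (fun X : ℝ => (X : ℂ)⁻¹ * ((s ⌊X⌋₊).card : ℂ)) atTop (𝓝 c) := by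
  have hzero := hmean (fun _ => 0) 0 (by simp)
  simpa [ekMean_card_fiber hN hs, ekTerm] using hzero

lemma eventually_nonempty (hN : ∀ a, P a → 0 < N a) (hs : ∀ M a, a ∈ s M ↔ P a ∧ N a ≤ M)
    (hc : c ≠ 0) (hmean : HasErdosKacMean (fun n => (Nat.card {a // P a ∧ N a = n} : ℂ)) c) :
    ∀ᶠ X : ℝ in atTop, (s ⌊X⌋₊).Nonempty := by
  filter_upwards [(tendsto_inv_mul_card hN hs hmean).eventually_ne hc] with X hX
  rw [Finset.nonempty_iff_ne_empty]
  rintro hempty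
  simp [hempty] at hX

/-- The normalised number of prime divisors of `n`, centred and scaled by `log log X`. -/
def normalizedOmega (X : ℝ) (n : ℕ) : ℝ := (n.primeFactors.card - loglog X) / √(loglog X)

lemma tendsto_charFun_normalizedOmega (hN : ∀ a, P a → 0 < N a)
    (hs : ∀ M a, a ∈ s M ↔ P a ∧ N a ≤ M) (hc : c ≠ 0)
    (hmean : HasErdosKacMean (fun n => (Nat.card {a // P a ∧ N a = n} : ℂ)) c) (t : ℝ) :
    Tendsto (fun X : ℝ => charFun (empiricalMeasure (s ⌊X⌋₊) (fun a => normalizedOmega X (N a))) t)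
      atTop (𝓝 (Complex.exp (-(t : ℂ) ^ 2 / 2))) := by
  have hθ : Tendsto (fun X => t / √(loglog X) * √(loglog X)) atTop (𝓝 t) := by
    refine tendsto_const_nhds.congr' ?_
    filter_upwards [tendsto_loglog_atTop.eventually_gt_atTop 0] with X hX
    rw [div_mul_cancel₀ _ (Real.sqrt_pos.2 hX).ne']
  have hquot := (hmean _ t hθ).div (tendsto_inv_mul_card hN hs hmean) hc
  rw [mul_div_cancel_left₀ _ hc] at hquot
  refine hquot.congr' ?_
  filter_upwards [eventually_gt_atTop 0, eventually_nonempty hN hs hc hmean] with X hX hne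
  have hX' : (X : ℂ)⁻¹ ≠ 0 := inv_ne_zero (by exact_mod_cast hX.ne')
  rw [Pi.div_apply, ekMean_card_fiber hN hs, mul_div_mul_left _ _ hX', div_eq_inv_mul,
    charFun_empiricalMeasure hne]
  congr 1
  refine Finset.sum_congr rfl fun a _ => ?_
  rw [ekTerm, normalizedOmega]
  push_cast
  ring_nf

theorem erdosKac_of_hasErdosKacMean (hN : ∀ a, P a → 0 < N a)
    (hfin : ∀ M, {a | P a ∧ N a ≤ M}.Finite) (hc : c ≠ 0)
    (hmean : HasErdosKacMean (fun n => (Nat.card {a // P a ∧ N a = n} : ℂ)) c) (z : ℝ) :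
    Tendsto (fun X : ℝ =>
      (Nat.card {a // P a ∧ N a ≤ X ∧
        (N a).primeFactors.card - loglog X ≤ z * √(loglog X)} : ℝ) /
      Nat.card {a // P a ∧ N a ≤ X}) atTop (𝓝 (gaussCDF z)) := by
  classical
  let s (M : ℕ) : Finset α := (hfin M).toFinset
  have hs (M : ℕ) (a : α) : a ∈ s M ↔ P a ∧ N a ≤ M := (hfin M).mem_toFinset
  let ν (X : ℝ) : ProbabilityMeasure ℝ :=
    ⟨empiricalMeasure (s ⌊X⌋₊) fun a => normalizedOmega X (N a), inferInstance⟩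
  refine (tendsto_measureReal_Iic_gaussCDF (ν := ν)
    (tendsto_charFun_normalizedOmega hN hs hc hmean) z).congr' ?_
  filter_upwards [eventually_nonempty hN hs hc hmean, eventually_ge_atTop 0,
    tendsto_loglog_atTop.eventually_gt_atTop 0] with X hne hX hL
  have hmem (a : α) : a ∈ s ⌊X⌋₊ ↔ P a ∧ N a ≤ X := by rw [hs, Nat.le_floor_iff hX]
  rw [ProbabilityMeasure.coe_mk, empiricalMeasure_real_Iic hne, Nat.subtype_card _ hmem]
  congr 2
  refine (Nat.subtype_card _ fun a => ?_).symm
  rw [Finset.mem_filter, hmem, normalizedOmega, div_le_iff₀ (Real.sqrt_pos.2 hL), and_assoc]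

end Counting

lemma finite_natAbs_le (P : ℤ → Prop) (M : ℕ) : {D : ℤ | P D ∧ D.natAbs ≤ M}.Finite :=
  (Set.finite_Icc (-M : ℤ) M).subset fun D hD => by
    have := hD.2
    exact ⟨by lia, by lia⟩

/-- **Erdős–Kac theorem for fundamental discriminants** (the case `d = 2`).
For every `z ∈ ℝ`, the proportion of fundamental discriminants `D` with `1 < |D| ≤ X`
satisfying `ω(D) - log log X ≤ z √(log log X)` tends to the standard Gaussian CDF at `z`;
that is, the number of ramified primes in quadratic fields of absolute discriminant at
most `X` is normally distributed with mean and variance `log log X`. -/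
theorem erdosKac_fundamental_discriminants (z : ℝ) :
    Tendsto (fun X : ℝ =>
      (Nat.card {D : ℤ // IsFundamentalDiscriminant D ∧ 1 < |D| ∧ (|D| : ℝ) ≤ X ∧
          (omegaZ D : ℝ) - Real.log (Real.log X) ≤
            z * Real.sqrt (Real.log (Real.log X))} : ℝ) /
      (Nat.card {D : ℤ // IsFundamentalDiscriminant D ∧ 1 < |D| ∧ (|D| : ℝ) ≤ X} : ℝ))
      atTop (nhds (gaussCDF z)) := by
  have hpos (D : ℤ) (hD : IsFundamentalDiscriminant D) : 0 < D.natAbs :=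
    Int.natAbs_pos.2 (abs_pos.1 (one_pos.trans hD.one_lt_abs))
  have hiff (D : ℤ) (Q : Prop) : IsFundamentalDiscriminant D ∧ 1 < |D| ∧ Q ↔
      IsFundamentalDiscriminant D ∧ Q :=
    and_congr_right fun hD => and_iff_right hD.one_lt_abs
  have hζ : (riemannZeta 2)⁻¹ ≠ 0 :=
    inv_ne_zero (riemannZeta_ne_zero_of_one_lt_re (by norm_num))
  have hmain := erdosKac_of_hasErdosKacMean hpos (finite_natAbs_le IsFundamentalDiscriminant) hζ
    hasErdosKacMean_card_fundamentalDiscriminant z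
  simp only [hiff]
  simpa only [loglog, omegaZ, Nat.cast_natAbs, Int.cast_abs] using hmain
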